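/- The following two conditions are equivalent: (c) K(b, b′) ∈ ℂ·zⁿ for all b, b′ ∈ B; (d) K(l, l′) ∈ zⁿ⁻²·ℂ[z⁻¹] (the ℂ-span of zⁿ⁻²⁻ʲ for j ≥ 0) for all l, l′ ∈ L. -/

import Mathlib

/-!
Setting: `V` a finite-dimensional complex vector space.  We model the space of
formal Laurent series `V((z))` (finitely many negative powers) as
`HahnModule ℤ ℂ V`, which is a module over `ℂ((z)) = LaurentSeries ℂ` and over `ℂ`.
`V[[z]]` is the ℂ-subspace of series with no negative-power coefficients.
-/

open HahnModule

noncomputable section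

variable (V : Type*) [AddCommGroup V] [Module ℂ V]

/-- Multiplication by the scalar `c ∈ ℂ` commutes with multiplication by Laurent series. -/
instance hmSMulCommClass : SMulCommClass ℂ (LaurentSeries ℂ) (HahnModule ℤ ℂ V) where
  smul_comm c P m := by
    have hcs : ∀ x : HahnModule ℤ ℂ V, (of ℂ).symm (c • x) = c • (of ℂ).symm x := fun _ => rfl
    have hsub : ((of ℂ).symm (c • m)).support ⊆ ((of ℂ).symm m).support := by
      intro j hj
      rw [HahnSeries.mem_support] at hj ⊢
      rw [hcs, HahnSeries.coeff_smul] at hj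
      intro h
      rw [h, smul_zero] at hj
      exact hj rfl
    apply (of ℂ).symm.injective
    ext a
    rw [hcs, HahnSeries.coeff_smul, HahnModule.coeff_smul,
      HahnModule.coeff_smul_right ((of ℂ).symm m).isPWO_support hsub, Finset.smul_sum]
    exact Finset.sum_congr rfl fun ij _ => by rw [hcs, HahnSeries.coeff_smul, smul_comm]

/-- Multiplication by `z^k` (`k ∈ ℤ`) as a `ℂ`-linear endomorphism of `V((z))`. -/
def zpowMul (k : ℤ) : HahnModule ℤ ℂ V →ₗ[ℂ] HahnModule ℤ ℂ V where
  toFun m := (HahnSeries.single k (1 : ℂ) : LaurentSeries ℂ) • m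
  map_add' x y := _root_.smul_add _ x y
  map_smul' c m := (smul_comm c _ m).symm

/-- `V[[z]] ⊆ V((z))`: the ℂ-subspace of series with vanishing coefficients in
negative degrees. -/
def posPart : Submodule ℂ (HahnModule ℤ ℂ V) where
  carrier := {f | ∀ n : ℤ, n < 0 → ((of ℂ).symm f).coeff n = 0}
  zero_mem' := fun n _ => rfl
  add_mem' := by
    intro a b ha hb n hn
    rw [of_symm_add, HahnSeries.coeff_add, ha n hn, hb n hn, add_zero]
  smul_mem' := by
    intro c f hf n hn
    have : (of ℂ).symm (c • f) = c • (of ℂ).symm f := rfl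
    rw [this, HahnSeries.coeff_smul, hf n hn, smul_zero]

/-- The constant-term map `V((z)) → V`, `f ↦ f(0)` (the coefficient of `z⁰`). -/
def constTerm : HahnModule ℤ ℂ V →ₗ[ℂ] V where
  toFun f := ((of ℂ).symm f).coeff 0
  map_add' x y := by
    show ((of ℂ).symm (x + y)).coeff 0 = ((of ℂ).symm x).coeff 0 + ((of ℂ).symm y).coeff 0
    rw [of_symm_add, HahnSeries.coeff_add]
  map_smul' c f := by
    show ((of ℂ).symm (c • f)).coeff 0 = c • ((of ℂ).symm f).coeff 0
    have : (of ℂ).symm (c • f) = c • (of ℂ).symm f := rfl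
    rw [this, HahnSeries.coeff_smul]

variable {V}

/-- A *section* of `V[[z]]`: a ℂ-subspace `B ⊆ V[[z]]` such that the constant-term
map `B → V` is a ℂ-linear isomorphism (i.e. bijective). -/
def IsSection (B : Submodule ℂ (HahnModule ℤ ℂ V)) : Prop :=
  B ≤ posPart V ∧ Function.Bijective ⇑((constTerm V).comp B.subtype)

/-- An *opposite filtration* of `V((z))`: a ℂ-subspace `L` with
`V((z)) = V[[z]] ⊕ L` and `L ⊆ z·L`. -/
def IsOppositeFiltration (L : Submodule ℂ (HahnModule ℤ ℂ V)) : Prop :=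
  IsCompl (posPart V) L ∧ L ≤ L.map (zpowMul V 1)

/-- The section `V[[z]] ∩ z·L` attached to an opposite filtration `L`. -/
def sectionOf (L : Submodule ℂ (HahnModule ℤ ℂ V)) : Submodule ℂ (HahnModule ℤ ℂ V) :=
  posPart V ⊓ L.map (zpowMul V 1)

/-- The opposite filtration `z⁻¹B[z⁻¹]`, the ℂ-linear span of `{z⁻ʲ·b : j ≥ 1, b ∈ B}`,
attached to a section `B`. -/
def oppositeOf (B : Submodule ℂ (HahnModule ℤ ℂ V)) : Submodule ℂ (HahnModule ℤ ℂ V) :=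
  Submodule.span ℂ {x | ∃ j : ℕ, 1 ≤ j ∧ ∃ b ∈ B, x = zpowMul V (-(j : ℤ)) b}

/-- The ℂ-algebra involution `σ : ℂ((z)) → ℂ((z))`, `P(z) ↦ P(−z)`,
i.e. `coeff n ↦ (−1)ⁿ · coeff n`. -/
def sigmaInv (P : LaurentSeries ℂ) : LaurentSeries ℂ where
  coeff n := ((((-1 : ℤˣ) ^ n : ℤˣ) : ℤ)) • P.coeff n
  isPWO_support' := P.isPWO_support.mono (by
    intro n hn
    rw [Function.mem_support] at hn
    rw [HahnSeries.mem_support]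
    intro h
    rw [h, smul_zero] at hn
    exact hn rfl)

/-!
Let `B = V[[z]] ∩ zL`. The filtration is recovered from the section as `L = z⁻¹B[z⁻¹]`. To see
that `L` is contained in the right-hand side, let `l ∈ L` have a pole of order at most `k + 1` and
split `zᵏl = p + l₀` along `V((z)) = V[[z]] ⊕ L`. Then `b = zl₀` lies in `B`, and `l - z⁻ᵏ⁻¹b` lies
in `L` and has a pole of order at most `k`; once there is no pole left, the remainder lies in
`V[[z]] ∩ L = 0`.

Since `K(zⁱx, zʲy) = (-1)ʲ zⁱ⁺ʲ K(x, y)`, condition (c) gives `K(z⁻ⁱb, z⁻ʲb') ∈ ℂ·zⁿ⁻ⁱ⁻ʲ` for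
`i, j ≥ 1`, which is (d). Conversely `B ⊆ zL` turns (d) into `K(B, B) ⊆ zⁿ·ℂ[z⁻¹]`, while
`B ⊆ V[[z]]` gives `K(B, B) ⊆ zⁿ·ℂ[[z]]`.
-/

section ZPowMul

theorem coeff_zpowMul (k a : ℤ) (x : HahnModule ℤ ℂ V) :
    ((of ℂ).symm (zpowMul V k x)).coeff a = ((of ℂ).symm x).coeff (a - k) := by
  simpa [zpowMul] using coeff_single_smul_vadd (r := (1 : ℂ)) (x := x) (a := a - k) (b := k)

theorem zpowMul_zpowMul (i j : ℤ) (x : HahnModule ℤ ℂ V) :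
    zpowMul V i (zpowMul V j x) = zpowMul V (i + j) x := by
  refine (smul_smul (HahnSeries.single i (1 : ℂ)) (HahnSeries.single j (1 : ℂ)) x).trans ?_
  rw [HahnSeries.single_mul_single, one_mul]
  rfl

theorem zpowMul_zero (x : HahnModule ℤ ℂ V) : zpowMul V 0 x = x := by
  simp [zpowMul]

theorem zpowMul_mem_posPart {k : ℤ} (hk : 0 ≤ k) {x : HahnModule ℤ ℂ V} (hx : x ∈ posPart V) :
    zpowMul V k x ∈ posPart V := fun a ha => by
  rw [coeff_zpowMul]
  exact hx _ (by lia)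

theorem exists_zpowMul_mem_posPart (x : HahnModule ℤ ℂ V) :
    ∃ k : ℕ, zpowMul V k x ∈ posPart V := by
  refine ⟨(-((of ℂ).symm x).order).toNat, fun a ha => ?_⟩
  rw [coeff_zpowMul]
  exact HahnSeries.coeff_eq_zero_of_lt_order (by lia)

end ZPowMul

section OppositeFiltration

variable {L : Submodule ℂ (HahnModule ℤ ℂ V)}

theorem zpowMul_neg_mem (hL : L ≤ L.map (zpowMul V 1)) (k : ℕ) {l : HahnModule ℤ ℂ V}
    (hl : l ∈ L) : zpowMul V (-k) l ∈ L := by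
  induction k generalizing l with
  | zero => simpa [zpowMul_zero] using hl
  | succ k ih =>
    obtain ⟨l', hl', rfl⟩ := hL hl
    simpa [zpowMul_zpowMul] using ih hl'

theorem zpowMul_neg_mem_of_mem_sectionOf (hL : L ≤ L.map (zpowMul V 1)) {k : ℕ} (hk : 1 ≤ k)
    {b : HahnModule ℤ ℂ V} (hb : b ∈ sectionOf L) : zpowMul V (-k) b ∈ L := by
  obtain ⟨-, l, hl, rfl⟩ := hb
  obtain ⟨k, rfl⟩ := Nat.exists_eq_add_of_le' hk
  simpa [zpowMul_zpowMul] using zpowMul_neg_mem hL k hl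

theorem oppositeOf_sectionOf_le (hL : L ≤ L.map (zpowMul V 1)) : oppositeOf (sectionOf L) ≤ L := by
  refine Submodule.span_le.mpr ?_
  rintro _ ⟨k, hk, b, hb, rfl⟩
  exact zpowMul_neg_mem_of_mem_sectionOf hL hk hb

theorem exists_mem_sectionOf_zpowMul_sub_mem_posPart (hL : Codisjoint (posPart V) L) {k : ℤ}
    {x : HahnModule ℤ ℂ V} (hx : zpowMul V (k + 1) x ∈ posPart V) :
    ∃ b ∈ sectionOf L, zpowMul V k (x - zpowMul V (-(k + 1)) b) ∈ posPart V := by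
  obtain ⟨p, l, hp, hl, hpl⟩ := Submodule.codisjoint_iff_exists_add_eq.mp hL (zpowMul V k x)
  refine ⟨zpowMul V 1 l, ⟨?_, Submodule.mem_map_of_mem hl⟩, ?_⟩
  · have : zpowMul V 1 l = zpowMul V (k + 1) x - zpowMul V 1 p := by
      rw [eq_sub_iff_add_eq', ← map_add, hpl, zpowMul_zpowMul, add_comm]
    rw [this]
    exact sub_mem hx (zpowMul_mem_posPart zero_le_one hp)
  · have : zpowMul V k (x - zpowMul V (-(k + 1)) (zpowMul V 1 l)) = p := by
      simp [zpowMul_zpowMul, zpowMul_zero, ← hpl]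
    rwa [this]

theorem mem_oppositeOf_sectionOf_of_zpowMul_mem_posPart (hL : IsOppositeFiltration L) {k : ℕ}
    {l : HahnModule ℤ ℂ V} (hl : l ∈ L) (hk : zpowMul V k l ∈ posPart V) :
    l ∈ oppositeOf (sectionOf L) := by
  induction k generalizing l with
  | zero =>
    have hl₀ : l = 0 :=
      Submodule.disjoint_def.mp hL.1.disjoint l (by simpa [zpowMul_zero] using hk) hl
    exact hl₀ ▸ zero_mem _
  | succ k ih =>
    rw [Nat.cast_succ] at hk
    obtain ⟨b, hb, hlb⟩ := exists_mem_sectionOf_zpowMul_sub_mem_posPart hL.1.codisjoint hk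
    have hbO : zpowMul V (-(k + 1 : ℤ)) b ∈ oppositeOf (sectionOf L) :=
      Submodule.subset_span ⟨k + 1, Nat.le_add_left 1 k, b, hb, by rw [Nat.cast_succ]⟩
    exact (Submodule.sub_mem_iff_left _ hbO).mp <|
      ih (sub_mem hl (oppositeOf_sectionOf_le hL.2 hbO)) hlb

theorem oppositeOf_sectionOf (hL : IsOppositeFiltration L) : oppositeOf (sectionOf L) = L := by
  refine le_antisymm (oppositeOf_sectionOf_le hL.2) fun l hl => ?_
  obtain ⟨k, hk⟩ := exists_zpowMul_mem_posPart l
  exact mem_oppositeOf_sectionOf_of_zpowMul_mem_posPart hL hl hk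

end OppositeFiltration

section HigherResiduePairing

theorem apply_apply_eq_zero_of_mem_span {R M N P : Type*} [CommSemiring R]
    [AddCommMonoid M] [AddCommMonoid N] [AddCommMonoid P] [Module R M] [Module R N] [Module R P]
    {f : M →ₗ[R] N →ₗ[R] P} {s : Set M} {t : Set N} (h : ∀ x ∈ s, ∀ y ∈ t, f x y = 0)
    {x : M} {y : N} (hx : x ∈ Submodule.span R s) (hy : y ∈ Submodule.span R t) : f x y = 0 := by
  have hf : Submodule.map₂ f (Submodule.span R s) (Submodule.span R t) ≤ ⊥ := by
    rw [Submodule.map₂_span_span, Submodule.span_le, Set.image2_subset_iff]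
    exact h
  exact Submodule.map₂_le.mp hf x hx y hy

theorem sigmaInv_single (k : ℤ) (c : ℂ) :
    sigmaInv (HahnSeries.single k c) = HahnSeries.single k (k.negOnePow * c) := by
  ext a
  change ((((-1 : ℤˣ) ^ a : ℤˣ) : ℤ)) • (HahnSeries.single k c).coeff a = _
  obtain rfl | ha := eq_or_ne a k
  · simp [Int.negOnePow_def]
  · simp [HahnSeries.coeff_single_of_ne ha]

/-- A sesquilinear pairing `V((z)) × V((z)) → ℂ((z))`: a `ℂ`-bilinear pairing which is
`ℂ((z))`-linear in the first variable and `ℂ((z))`-semilinear with respect to `σ : z ↦ -z` in the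
second. Bundling the `ℂ`-bilinearity makes the coefficients of `K` bilinear forms on `V((z))`. -/
structure IsLaurentSesquilinear
    (K : HahnModule ℤ ℂ V →ₗ[ℂ] HahnModule ℤ ℂ V →ₗ[ℂ] LaurentSeries ℂ) : Prop where
  smul_left (P : LaurentSeries ℂ) (x y : HahnModule ℤ ℂ V) : K (P • x) y = P * K x y
  smul_right (P : LaurentSeries ℂ) (x y : HahnModule ℤ ℂ V) : K x (P • y) = sigmaInv P * K x y

/-- A higher residue pairing on `V((z))`: a sesquilinear pairing `K` for which
`K(V[[z]], V[[z]]) ⊆ zⁿ·ℂ[[z]]`. -/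
structure IsHigherResiduePairing (n : ℤ)
    (K : HahnModule ℤ ℂ V →ₗ[ℂ] HahnModule ℤ ℂ V →ₗ[ℂ] LaurentSeries ℂ) : Prop
    extends IsLaurentSesquilinear K where
  coeff_eq_zero_of_lt :
    ∀ x ∈ posPart V, ∀ y ∈ posPart V, ∀ a : ℤ, a < n → (K x y).coeff a = 0

variable {n : ℤ} {K : HahnModule ℤ ℂ V →ₗ[ℂ] HahnModule ℤ ℂ V →ₗ[ℂ] LaurentSeries ℂ}
  {L : Submodule ℂ (HahnModule ℤ ℂ V)}

theorem IsLaurentSesquilinear.coeff_zpowMul_zpowMul (hK : IsLaurentSesquilinear K)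
    (i j a : ℤ) (x y : HahnModule ℤ ℂ V) :
    (K (zpowMul V i x) (zpowMul V j y)).coeff a = j.negOnePow * (K x y).coeff (a - i - j) := by
  change (K (HahnSeries.single i (1 : ℂ) • x) (HahnSeries.single j (1 : ℂ) • y)).coeff a = _
  rw [hK.smul_left, hK.smul_right, sigmaInv_single, HahnSeries.coeff_single_mul,
    HahnSeries.coeff_single_mul, one_mul, mul_one]

theorem IsLaurentSesquilinear.coeff_eq_zero_of_mem_oppositeOf (hK : IsLaurentSesquilinear K)
    {B : Submodule ℂ (HahnModule ℤ ℂ V)}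
    (hB : ∀ b ∈ B, ∀ b' ∈ B, ∀ a : ℤ, n < a → (K b b').coeff a = 0) {x y : HahnModule ℤ ℂ V}
    (hx : x ∈ oppositeOf B) (hy : y ∈ oppositeOf B) {a : ℤ} (ha : n - 2 < a) :
    (K x y).coeff a = 0 := by
  refine apply_apply_eq_zero_of_mem_span (f := K.compr₂ (HahnSeries.coeff.linearMap a)) ?_ hx hy
  rintro _ ⟨i, hi, b, hb, rfl⟩ _ ⟨j, hj, b', hb', rfl⟩
  change (K (zpowMul V (-i) b) (zpowMul V (-j) b')).coeff a = 0
  rw [hK.coeff_zpowMul_zpowMul, hB b hb b' hb' _ (by lia), mul_zero]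

theorem IsHigherResiduePairing.coeff_eq_zero_of_mem_sectionOf (hK : IsHigherResiduePairing n K)
    (hL : ∀ l ∈ L, ∀ l' ∈ L, ∀ a : ℤ, n - 2 < a → (K l l').coeff a = 0) {b b' : HahnModule ℤ ℂ V}
    (hb : b ∈ sectionOf L) (hb' : b' ∈ sectionOf L) {a : ℤ} (ha : a ≠ n) :
    (K b b').coeff a = 0 := by
  obtain ⟨hbP, l, hl, rfl⟩ := hb
  obtain ⟨hbP', l', hl', rfl⟩ := hb'
  obtain han | hna := ha.lt_or_gt
  · exact hK.coeff_eq_zero_of_lt _ hbP _ hbP' a han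
  · rw [hK.coeff_zpowMul_zpowMul, hL l hl l' hl' _ (by lia), mul_zero]

theorem metric_condition_general (hK : IsHigherResiduePairing n K) (hL : IsOppositeFiltration L) :
    (∀ b ∈ sectionOf L, ∀ b' ∈ sectionOf L, ∀ j : ℤ, j ≠ n → (K b b').coeff j = 0) ↔
    (∀ l ∈ L, ∀ l' ∈ L, ∀ j : ℤ, n - 2 < j → (K l l').coeff j = 0) := by
  constructor
  · intro hc l hl l' hl' j hj
    rw [← oppositeOf_sectionOf hL] at hl hl'
    exact hK.coeff_eq_zero_of_mem_oppositeOf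
      (fun b hb b' hb' a ha => hc b hb b' hb' a ha.ne') hl hl' hj
  · exact fun hd b hb b' hb' j hj => hK.coeff_eq_zero_of_mem_sectionOf hd hb hb' hj

end HigherResiduePairing

/-- Let `K` be a higher residue pairing on `V((z))`, i.e. a
ℂ-bilinear pairing with values in `ℂ((z))` which is `ℂ((z))`-sesquilinear with
respect to the involution `σ : z ↦ −z` and satisfies `K(V[[z]], V[[z]]) ⊆ zⁿℂ[[z]]`.
For an opposite filtration `L` with associated section `B = V[[z]] ∩ z·L`, the
following are equivalent:
(c) `K(b, b′) ∈ ℂ·zⁿ` for all `b, b′ ∈ B`;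
(d) `K(l, l′) ∈ zⁿ⁻²·ℂ[z⁻¹]` for all `l, l′ ∈ L`. -/
theorem metric_condition
    (V : Type*) [AddCommGroup V] [Module ℂ V] [FiniteDimensional ℂ V] (n : ℤ)
    (K : HahnModule ℤ ℂ V → HahnModule ℤ ℂ V → LaurentSeries ℂ)
    (hKaddl : ∀ x y w : HahnModule ℤ ℂ V, K (x + y) w = K x w + K y w)
    (hKaddr : ∀ x y w : HahnModule ℤ ℂ V, K w (x + y) = K w x + K w y)
    (hKsmull : ∀ (c : ℂ) (x w : HahnModule ℤ ℂ V), K (c • x) w = c • K x w)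
    (hKsmulr : ∀ (c : ℂ) (x w : HahnModule ℤ ℂ V), K w (c • x) = c • K w x)
    (hKPl : ∀ (P : LaurentSeries ℂ) (x w : HahnModule ℤ ℂ V), K (P • x) w = P * K x w)
    (hKPr : ∀ (P : LaurentSeries ℂ) (x w : HahnModule ℤ ℂ V),
      K w (P • x) = sigmaInv P * K w x)
    (hKpure : ∀ x ∈ posPart V, ∀ y ∈ posPart V, ∀ j : ℤ, j < n → (K x y).coeff j = 0)
    (L : Submodule ℂ (HahnModule ℤ ℂ V)) (hL : IsOppositeFiltration L) :
    (∀ b ∈ sectionOf L, ∀ b' ∈ sectionOf L, ∀ j : ℤ, j ≠ n → (K b b').coeff j = 0) ↔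
    (∀ l ∈ L, ∀ l' ∈ L, ∀ j : ℤ, n - 2 < j → (K l l').coeff j = 0) :=
  metric_condition_general
    (K := LinearMap.mk₂ ℂ K hKaddl hKsmull (fun w x y => hKaddr x y w) fun c w x => hKsmulr c x w)
    ⟨⟨hKPl, fun P w x => hKPr P x w⟩, hKpure⟩ hL

end
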